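/- (Substitution) Let α and β be formulas such that α ⇔ β is X5-valid. Then for any formula φ and any atom p, the formula φ[α/p] ⇔ φ[β/p] is X5-valid. -/

import Mathlib

open scoped Classical

namespace X5Paper

/-- Explicit literals: an atom `p` or its explicit negation `∼p`. -/
inductive XLit (At : Type) : Type
  | pos : At → XLit At
  | neg : At → XLit At

/-- A set of explicit literals is consistent if it contains no atom together
with its explicit negation. -/
def Consistent {At : Type} (T : Set (XLit At)) : Prop :=
  ∀ p : At, ¬ (XLit.pos p ∈ T ∧ XLit.neg p ∈ T)

/-- Nested expressions: ⊤, ⊥, atoms, ∧, ∨, default negation ¬, explicit negation ∼. -/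
inductive NExp (At : Type) : Type
  | top : NExp At
  | bot : NExp At
  | atom : At → NExp At
  | conj : NExp At → NExp At → NExp At
  | disj : NExp At → NExp At → NExp At
  | dneg : NExp At → NExp At
  | xneg : NExp At → NExp At

variable {At : Type}

mutual
/-- Satisfaction `T ⊨ F` of a nested expression by a set of explicit literals. -/
def NExp.sat (T : Set (XLit At)) : NExp At → Prop
  | .top => True
  | .bot => False
  | .atom p => XLit.pos p ∈ T
  | .conj F G => NExp.sat T F ∧ NExp.sat T G
  | .disj F G => NExp.sat T F ∨ NExp.sat T G
  | .dneg F => ¬ NExp.sat T F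
  | .xneg F => NExp.fals T F

/-- Falsification `T ⫤ F` of a nested expression by a set of explicit literals. -/
def NExp.fals (T : Set (XLit At)) : NExp At → Prop
  | .top => False
  | .bot => True
  | .atom p => XLit.neg p ∈ T
  | .conj F G => NExp.fals T F ∨ NExp.fals T G
  | .disj F G => NExp.fals T F ∧ NExp.fals T G
  | .dneg F => NExp.sat T F
  | .xneg F => NExp.sat T F
end

/-- The reduct `F^T` of a nested expression. -/
noncomputable def NExp.reduct (T : Set (XLit At)) : NExp At → NExp At
  | .top => .top
  | .bot => .bot
  | .atom p => .atom p
  | .conj F G => .conj (NExp.reduct T F) (NExp.reduct T G)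
  | .disj F G => .disj (NExp.reduct T F) (NExp.reduct T G)
  | .dneg F => if NExp.sat T F then .bot else .top
  | .xneg F => .xneg (NExp.reduct T F)

/-- Formulas: atoms, ⊥, ∧, ∨, →, explicit negation ∼. -/
inductive Frm (At : Type) : Type
  | atom : At → Frm At
  | bot : Frm At
  | conj : Frm At → Frm At → Frm At
  | disj : Frm At → Frm At → Frm At
  | impl : Frm At → Frm At → Frm At
  | xneg : Frm At → Frm At

/-- Default negation `¬φ := φ → ⊥`. -/
def Frm.neg (φ : Frm At) : Frm At := Frm.impl φ Frm.bot

/-- `⊤ := ¬⊥`. -/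
def Frm.top : Frm At := Frm.neg Frm.bot

/-- Weak equivalence `φ ↔ ψ := (φ→ψ) ∧ (ψ→φ)`. -/
def Frm.iff (φ ψ : Frm At) : Frm At := Frm.conj (Frm.impl φ ψ) (Frm.impl ψ φ)

/-- Strong equivalence connective `φ ⇔ ψ := (φ↔ψ) ∧ (∼φ↔∼ψ)`. -/
def Frm.siff (φ ψ : Frm At) : Frm At :=
  Frm.conj (Frm.iff φ ψ) (Frm.iff (Frm.xneg φ) (Frm.xneg ψ))

mutual
/-- X5 satisfaction `⟨H,T⟩ ⊨ φ`. -/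
def Sat : Set (XLit At) → Set (XLit At) → Frm At → Prop
  | H, _, .atom p => XLit.pos p ∈ H
  | _, _, .bot => False
  | H, T, .conj φ ψ => Sat H T φ ∧ Sat H T ψ
  | H, T, .disj φ ψ => Sat H T φ ∨ Sat H T ψ
  | H, T, .impl φ ψ => (Sat H T φ → Sat H T ψ) ∧ (Sat T T φ → Sat T T ψ)
  | H, T, .xneg φ => Fals H T φ

/-- X5 falsification `⟨H,T⟩ ⫤ φ`. -/
def Fals : Set (XLit At) → Set (XLit At) → Frm At → Prop
  | H, _, .atom p => XLit.neg p ∈ H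
  | _, _, .bot => True
  | H, T, .conj φ ψ => Fals H T φ ∨ Fals H T ψ
  | H, T, .disj φ ψ => Fals H T φ ∧ Fals H T ψ
  | H, T, .impl φ ψ => Sat T T φ ∧ Fals H T ψ
  | H, T, .xneg φ => Sat H T φ
end

/-- X5 validity: satisfied by every X5-interpretation `⟨H,T⟩`. -/
def X5Valid (φ : Frm At) : Prop :=
  ∀ H T : Set (XLit At), Consistent H → Consistent T → H ⊆ T → Sat H T φ

/-- Nested expressions viewed as formulas (`¬F := F → ⊥`, `⊤ := ¬⊥`). -/
def NExp.toFrm : NExp At → Frm At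
  | .top => Frm.top
  | .bot => .bot
  | .atom p => .atom p
  | .conj F G => .conj F.toFrm G.toFrm
  | .disj F G => .disj F.toFrm G.toFrm
  | .dneg F => Frm.neg F.toFrm
  | .xneg F => .xneg F.toFrm

/-- Uniform substitution `φ[α/p]`. -/
noncomputable def Frm.subst (p : At) (α : Frm At) : Frm At → Frm At
  | .atom q => if q = p then α else .atom q
  | .bot => .bot
  | .conj φ ψ => .conj (Frm.subst p α φ) (Frm.subst p α ψ)
  | .disj φ ψ => .disj (Frm.subst p α φ) (Frm.subst p α ψ)
  | .impl φ ψ => .impl (Frm.subst p α φ) (Frm.subst p α ψ)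
  | .xneg φ => .xneg (Frm.subst p α φ)

/-- A formula contains no explicit negation. -/
def NoXneg : Frm At → Prop
  | .atom _ => True
  | .bot => True
  | .conj φ ψ => NoXneg φ ∧ NoXneg ψ
  | .disj φ ψ => NoXneg φ ∧ NoXneg ψ
  | .impl φ ψ => NoXneg φ ∧ NoXneg ψ
  | .xneg _ => False

/-- HT satisfaction for (∼-free) formulas; the `∼` clause is a dummy. -/
def HTSat : Set At → Set At → Frm At → Prop
  | H, _, .atom p => p ∈ H
  | _, _, .bot => False
  | H, T, .conj φ ψ => HTSat H T φ ∧ HTSat H T ψ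
  | H, T, .disj φ ψ => HTSat H T φ ∨ HTSat H T ψ
  | H, T, .impl φ ψ => (HTSat H T φ → HTSat H T ψ) ∧ (HTSat T T φ → HTSat T T ψ)
  | _, _, .xneg _ => False

/-- HT validity for ∼-free formulas. -/
def HTValid (φ : Frm At) : Prop :=
  ∀ H T : Set At, H ⊆ T → HTSat H T φ

/-- Atom `p` occurs in a formula. -/
def Frm.occurs (p : At) : Frm At → Prop
  | .atom q => q = p
  | .bot => False
  | .conj φ ψ => Frm.occurs p φ ∨ Frm.occurs p ψ
  | .disj φ ψ => Frm.occurs p φ ∨ Frm.occurs p ψ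
  | .impl φ ψ => Frm.occurs p φ ∨ Frm.occurs p ψ
  | .xneg φ => Frm.occurs p φ

/-- Atom `p` occurs only outside the scope of explicit negation `∼`. -/
def OutsideXneg (p : At) : Frm At → Prop
  | .atom _ => True
  | .bot => True
  | .conj φ ψ => OutsideXneg p φ ∧ OutsideXneg p ψ
  | .disj φ ψ => OutsideXneg p φ ∧ OutsideXneg p ψ
  | .impl φ ψ => OutsideXneg p φ ∧ OutsideXneg p ψ
  | .xneg φ => ¬ Frm.occurs p φ

/-- A rule `F → G` of a program. -/
abbrev Rule (At : Type) := NExp At × NExp At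

/-- `T` is a model of a program: it satisfies the head whenever it satisfies the body. -/
def NModels (T : Set (XLit At)) (Prog : Set (Rule At)) : Prop :=
  ∀ r ∈ Prog, NExp.sat T r.1 → NExp.sat T r.2

/-- The reduct `Π^T` of a program. -/
noncomputable def progReduct (T : Set (XLit At)) (Prog : Set (Rule At)) : Set (Rule At) :=
  (fun r : Rule At => (NExp.reduct T r.1, NExp.reduct T r.2)) '' Prog

/-- `T` is an answer set of `Π`: a ⊆-minimal (consistent) model of the reduct `Π^T`. -/
def AnswerSet (Prog : Set (Rule At)) (T : Set (XLit At)) : Prop :=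
  Consistent T ∧ NModels T (progReduct T Prog) ∧
    ∀ T' : Set (XLit At), Consistent T' → T' ⊆ T → NModels T' (progReduct T Prog) → T' = T

/-- The theory corresponding to a program: each rule `F → G` read as an implication. -/
def ruleTheory (Prog : Set (Rule At)) : Set (Frm At) :=
  (fun r : Rule At => Frm.impl r.1.toFrm r.2.toFrm) '' Prog

/-- `⟨T,T⟩` is an equilibrium model of the theory `Γ`. -/
def EqModel (Γ : Set (Frm At)) (T : Set (XLit At)) : Prop :=
  Consistent T ∧ (∀ φ ∈ Γ, Sat T T φ) ∧
    ¬ ∃ H : Set (XLit At), Consistent H ∧ H ⊂ T ∧ ∀ φ ∈ Γ, Sat H T φ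

mutual
/-- Generalized Ferraris reduct `φ^T₊` of a formula (a nested expression). -/
noncomputable def redPos (T : Set (XLit At)) : Frm At → NExp At
  | .atom p => if XLit.pos p ∈ T then .atom p else .bot
  | .bot => .bot
  | .conj α β => if Sat T T (Frm.conj α β) then .conj (redPos T α) (redPos T β) else .bot
  | .disj α β => if Sat T T (Frm.disj α β) then .disj (redPos T α) (redPos T β) else .bot
  | .impl α β => if Sat T T (Frm.impl α β) then .disj (.dneg (redPos T α)) (redPos T β) else .bot
  | .xneg α => if Sat T T (Frm.xneg α) then .xneg (redNeg T α) else .bot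

/-- Generalized Ferraris reduct `φ^T₋` of a formula (a nested expression). -/
noncomputable def redNeg (T : Set (XLit At)) : Frm At → NExp At
  | .atom p => if XLit.neg p ∈ T then .atom p else .top
  | .bot => .bot
  | .conj α β => if Fals T T (Frm.conj α β) then .conj (redNeg T α) (redNeg T β) else .top
  | .disj α β => if Fals T T (Frm.disj α β) then .disj (redNeg T α) (redNeg T β) else .top
  | .impl α β => if Fals T T (Frm.impl α β) then redNeg T β else .top
  | .xneg α => if Fals T T (Frm.xneg α) then .xneg (redPos T α) else .top
end

mutual
/-- Generalized Ferraris reduct `F^T₊` of a nested expression. -/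
noncomputable def nRedPos (T : Set (XLit At)) : NExp At → NExp At
  | .top => .top
  | .bot => .bot
  | .atom p => if XLit.pos p ∈ T then .atom p else .bot
  | .conj α β => if NExp.sat T (NExp.conj α β) then .conj (nRedPos T α) (nRedPos T β) else .bot
  | .disj α β => if NExp.sat T (NExp.disj α β) then .disj (nRedPos T α) (nRedPos T β) else .bot
  | .dneg α => if NExp.sat T (NExp.dneg α) then .dneg (nRedPos T α) else .bot
  | .xneg α => if NExp.sat T (NExp.xneg α) then .xneg (nRedNeg T α) else .bot

/-- Generalized Ferraris reduct `F^T₋` of a nested expression. -/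
noncomputable def nRedNeg (T : Set (XLit At)) : NExp At → NExp At
  | .top => .top
  | .bot => .bot
  | .atom p => if XLit.neg p ∈ T then .atom p else .top
  | .conj α β => if NExp.fals T (NExp.conj α β) then .conj (nRedNeg T α) (nRedNeg T β) else .top
  | .disj α β => if NExp.fals T (NExp.disj α β) then .disj (nRedNeg T α) (nRedNeg T β) else .top
  | .dneg α => if NExp.fals T (NExp.dneg α) then .bot else .top
  | .xneg α => if NExp.fals T (NExp.xneg α) then .xneg (nRedPos T α) else .top
end

/-- The five-valued valuation `M(φ)` of `M = ⟨H,T⟩`. -/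
noncomputable def val (H T : Set (XLit At)) : Frm At → ℤ
  | .atom p =>
      if XLit.pos p ∈ H then 2
      else if XLit.neg p ∈ H then -2
      else if XLit.pos p ∈ T then 1
      else if XLit.neg p ∈ T then -1
      else 0
  | .bot => -2
  | .conj φ ψ => min (val H T φ) (val H T ψ)
  | .disj φ ψ => max (val H T φ) (val H T ψ)
  | .impl φ ψ => if val H T φ ≤ max (val H T ψ) 0 then 2 else val H T ψ
  | .xneg φ => - val H T φ

/-! At `⟨H,T⟩`, the formula `α ⇔ β` says that `α` and `β` agree, in satisfaction and in
falsification, both at `⟨H,T⟩` and at `⟨T,T⟩`. The value of a formula at `⟨H,T⟩` is determined by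
the values of its immediate subformulas at these two interpretations, so the agreement of `α` and
`β` propagates to `φ[α/p]` and `φ[β/p]`, one interpretation at a time. -/

/-- `φ` and `ψ` are satisfied alike and falsified alike at `⟨H,T⟩`. This is the pointwise relation
behind `⇔`, whose truth at `⟨H,T⟩` also requires the same agreement at `⟨T,T⟩`. -/
structure AgreeAt (H T : Set (XLit At)) (φ ψ : Frm At) : Prop where
  sat_iff : Sat H T φ ↔ Sat H T ψ
  fals_iff : Fals H T φ ↔ Fals H T ψ

section Agreement

variable {H T : Set (XLit At)} {α β φ φ' ψ ψ' : Frm At}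

theorem sat_iff_iff :
    Sat H T (Frm.iff α β) ↔ (Sat H T α ↔ Sat H T β) ∧ (Sat T T α ↔ Sat T T β) := by
  simp only [Frm.iff, Sat]
  tauto

theorem sat_siff_iff_agreeAt :
    Sat H T (Frm.siff α β) ↔ AgreeAt H T α β ∧ AgreeAt T T α β := by
  have sat_siff : Sat H T (Frm.siff α β) ↔
      ((Sat H T α ↔ Sat H T β) ∧ (Sat T T α ↔ Sat T T β)) ∧
        ((Fals H T α ↔ Fals H T β) ∧ (Fals T T α ↔ Fals T T β)) := by
    simp only [Frm.siff, Sat, sat_iff_iff]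
  constructor
  · intro h
    obtain ⟨⟨sat, satT⟩, fals, falsT⟩ := sat_siff.1 h
    exact ⟨⟨sat, fals⟩, satT, falsT⟩
  · rintro ⟨⟨sat, fals⟩, satT, falsT⟩
    exact sat_siff.2 ⟨⟨sat, satT⟩, fals, falsT⟩

theorem AgreeAt.refl (φ : Frm At) : AgreeAt H T φ φ :=
  ⟨Iff.rfl, Iff.rfl⟩

theorem AgreeAt.conj (hφ : AgreeAt H T φ φ') (hψ : AgreeAt H T ψ ψ') :
    AgreeAt H T (.conj φ ψ) (.conj φ' ψ') where
  sat_iff := by simpa only [Sat] using and_congr hφ.sat_iff hψ.sat_iff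
  fals_iff := by simpa only [Fals] using or_congr hφ.fals_iff hψ.fals_iff

theorem AgreeAt.disj (hφ : AgreeAt H T φ φ') (hψ : AgreeAt H T ψ ψ') :
    AgreeAt H T (.disj φ ψ) (.disj φ' ψ') where
  sat_iff := by simpa only [Sat] using or_congr hφ.sat_iff hψ.sat_iff
  fals_iff := by simpa only [Fals] using and_congr hφ.fals_iff hψ.fals_iff

theorem AgreeAt.impl (hφ : AgreeAt H T φ φ') (hψ : AgreeAt H T ψ ψ')
    (hφT : Sat T T φ ↔ Sat T T φ') (hψT : Sat T T ψ ↔ Sat T T ψ') :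
    AgreeAt H T (.impl φ ψ) (.impl φ' ψ') where
  sat_iff := by
    simpa only [Sat] using and_congr (imp_congr hφ.sat_iff hψ.sat_iff) (imp_congr hφT hψT)
  fals_iff := by simpa only [Fals] using and_congr hφT hψ.fals_iff

theorem AgreeAt.xneg (hφ : AgreeAt H T φ φ') : AgreeAt H T (.xneg φ) (.xneg φ') where
  sat_iff := by simpa only [Sat] using hφ.fals_iff
  fals_iff := by simpa only [Fals] using hφ.sat_iff

theorem AgreeAt.subst (h : AgreeAt H T α β) (hT : AgreeAt T T α β) (φ : Frm At) (p : At) :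
    AgreeAt H T (Frm.subst p α φ) (Frm.subst p β φ) := by
  induction φ generalizing H with
  | atom q =>
    by_cases hq : q = p
    · simpa only [Frm.subst, if_pos hq] using h
    · simpa only [Frm.subst, if_neg hq] using AgreeAt.refl (.atom q)
  | bot => exact .refl .bot
  | conj φ ψ ihφ ihψ => exact (ihφ h).conj (ihψ h)
  | disj φ ψ ihφ ihψ => exact (ihφ h).disj (ihψ h)
  | impl φ ψ ihφ ihψ => exact (ihφ h).impl (ihψ h) (ihφ hT).sat_iff (ihψ hT).sat_iff
  | xneg φ ihφ => exact (ihφ h).xneg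

theorem stmt15_general (h : Sat H T (Frm.siff α β)) (φ : Frm At) (p : At) :
    Sat H T (Frm.siff (Frm.subst p α φ) (Frm.subst p β φ)) := by
  obtain ⟨agree, agreeT⟩ := sat_siff_iff_agreeAt.1 h
  exact sat_siff_iff_agreeAt.2 ⟨agree.subst agreeT φ p, agreeT.subst agreeT φ p⟩

end Agreement

/-- Substitution: if `α ⇔ β` is X5-valid then, for any formula
`φ` and atom `p`, `φ[α/p] ⇔ φ[β/p]` is X5-valid. -/
theorem stmt15 (At : Type) (α β : Frm At) (hsiff : X5Valid (Frm.siff α β))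
    (φ : Frm At) (p : At) :
    X5Valid (Frm.siff (Frm.subst p α φ) (Frm.subst p β φ)) :=
  fun H T hH hT hHT => stmt15_general (hsiff H T hH hT hHT) φ p

end X5Paper
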